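/- arXiv:2508.10084 — 2 statements merged into one kernel-verified Lean document; each statement's English description precedes it below -/
import Mathlib

section
/- Let (R, Ad_Γ) be a graded von Neumann algebra. If the even part R^(0) is a type III von Neumann algebra, then R is of type III. -/
noncomputable section

variable {H : Type*} [NormedAddCommGroup H] [InnerProductSpace ℂ H] [CompleteSpace H]

/-- A self-adjoint unitary operator. -/
def IsSAU (Γ : H →L[ℂ] H) : Prop := star Γ = Γ ∧ Γ * Γ = 1

/-- The even part of a graded set of operators. -/
def evenPart (R : Set (H →L[ℂ] H)) (Γ : H →L[ℂ] H) : Set (H →L[ℂ] H) :=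
  {x | x ∈ R ∧ Γ * x * Γ = x}

/-- The odd part of a graded set of operators. -/
def oddPart (R : Set (H →L[ℂ] H)) (Γ : H →L[ℂ] H) : Set (H →L[ℂ] H) :=
  {x | x ∈ R ∧ Γ * x * Γ = -x}

/-- The center of a set of operators. -/
def centerSet (R : Set (H →L[ℂ] H)) : Set (H →L[ℂ] H) :=
  {x | x ∈ R ∧ ∀ y ∈ R, x * y = y * x}

/-- An (orthogonal) projection operator. -/
def IsProjOp (e : H →L[ℂ] H) : Prop := e * e = e ∧ star e = e

/-- `e` is a subprojection of `f`. -/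
def SubProj (e f : H →L[ℂ] H) : Prop := e * f = e ∧ f * e = e

/-- Murray–von Neumann equivalence of projections relative to `M`. -/
def MvNEquiv (M : Set (H →L[ℂ] H)) (e f : H →L[ℂ] H) : Prop :=
  ∃ v ∈ M, star v * v = e ∧ v * star v = f

/-- `e` is finite relative to `M`. -/
def FiniteProj (M : Set (H →L[ℂ] H)) (e : H →L[ℂ] H) : Prop :=
  ∀ f ∈ M, IsProjOp f → SubProj f e → MvNEquiv M f e → f = e

/-- `e` is an abelian projection relative to `M`: the corner `eMe` is commutative. -/
def AbelianProj (M : Set (H →L[ℂ] H)) (e : H →L[ℂ] H) : Prop :=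
  ∀ x ∈ M, ∀ y ∈ M, (e * x * e) * (e * y * e) = (e * y * e) * (e * x * e)

/-- A von Neumann algebra (given as a set) is of type III: no nonzero finite projections. -/
def TypeIII (M : Set (H →L[ℂ] H)) : Prop :=
  ∀ e ∈ M, IsProjOp e → FiniteProj M e → e = 0

/-- Type II₁ : finite with no nonzero abelian projections. -/
def TypeII1 (M : Set (H →L[ℂ] H)) : Prop :=
  FiniteProj M 1 ∧ ∀ e ∈ M, IsProjOp e → AbelianProj M e → e = 0

/-- Type I_n : the identity is the sum of `n` orthogonal, mutually equivalent
abelian projections. -/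
def TypeI (M : Set (H →L[ℂ] H)) (n : Cardinal) : Prop :=
  ∃ (ι : Type) (E : ι → H →L[ℂ] H), Cardinal.mk ι = n ∧
    (∀ a, E a ∈ M ∧ IsProjOp (E a) ∧ AbelianProj M (E a)) ∧
    (Pairwise fun a b => E a * E b = 0) ∧
    (∀ a b, MvNEquiv M (E a) (E b)) ∧
    (∀ v : H, HasSum (fun a => (E a) v) v)

/-- The scalar operators. -/
def scalarOps (H : Type*) [NormedAddCommGroup H] [InnerProductSpace ℂ H] [CompleteSpace H] :
    Set (H →L[ℂ] H) := Set.range fun c : ℂ => c • (1 : H →L[ℂ] H)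

/-- `M` is a factor. -/
def IsFactor (M : Set (H →L[ℂ] H)) : Prop := centerSet M = scalarOps H

/-- `R` is graded by the self-adjoint unitary `Γ`. -/
def GradedBy (R : Set (H →L[ℂ] H)) (Γ : H →L[ℂ] H) : Prop :=
  IsSAU Γ ∧ ∀ x ∈ R, Γ * x * Γ ∈ R

/-- The von Neumann algebra generated by a (star-closed, unital) set:
its double commutant. -/
def genVN (S : Set (H →L[ℂ] H)) : Set (H →L[ℂ] H) :=
  Set.centralizer (Set.centralizer S)

/-- `c` is the central support of `T` in `M`. -/
def IsCentralSupport (M : Set (H →L[ℂ] H)) (T c : H →L[ℂ] H) : Prop :=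
  c ∈ centerSet M ∧ IsProjOp c ∧ c * T = T ∧
    ∀ d ∈ centerSet M, IsProjOp d → d * T = T → c * d = c

theorem aux_zero (A B : H →L[ℂ] H) (hA : star A = A) (h1 : B * A = 0)
    (h2 : ∀ x, A x = 0 → B x = 0) : B = 0 := by
  ext x
  let K : Submodule ℂ H := (LinearMap.range (A : H →ₗ[ℂ] H)).topologicalClosure
  haveI : CompleteSpace K := (Submodule.isClosed_topologicalClosure _).completeSpace_coe
  obtain ⟨y, hy, z, hz, rfl⟩ := K.exists_add_mem_mem_orthogonal x
  have hz' : A z = 0 := by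
    have hz2 : ∀ w, inner ℂ (A w) z = 0 := fun w =>
      hz _ (Submodule.le_topologicalClosure _ ⟨w, rfl⟩)
    have h3 := hz2 (A z)
    rw [← ContinuousLinearMap.adjoint_inner_right, ← ContinuousLinearMap.star_eq_adjoint, hA] at h3
    exact inner_self_eq_zero.mp h3
  have hy' : B y = 0 := by
    have hcl : IsClosed {y | B y = 0} := isClosed_eq (by fun_prop) continuous_const
    have hsub : ((LinearMap.range (A : H →ₗ[ℂ] H) : Submodule ℂ H) : Set H) ⊆ {y | B y = 0} := by
      rintro _ ⟨w, rfl⟩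
      exact DFunLike.congr_fun h1 w
    exact closure_minimal hsub hcl hy
  simp [hy', h2 z hz']

theorem aux_norm (A V : H →L[ℂ] H) (hAV : star A * A = star V * V) (x : H) :
    ‖V x‖ = ‖A x‖ := by
  have h : ∀ B : H →L[ℂ] H, inner ℂ (B x) (B x) = inner ℂ x ((star B * B) x) := by
    intro B
    rw [ContinuousLinearMap.mul_apply, ContinuousLinearMap.star_eq_adjoint,
      ContinuousLinearMap.adjoint_inner_right]
  have h4 : inner ℂ (V x) (V x) = inner ℂ (A x) (A x) := by rw [h V, h A, hAV]
  rw [inner_self_eq_norm_sq_to_K, inner_self_eq_norm_sq_to_K] at h4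
  have h5 : ‖V x‖ ^ 2 = ‖A x‖ ^ 2 := by exact_mod_cast h4
  exact (pow_left_inj₀ (norm_nonneg _) (norm_nonneg _) two_ne_zero).mp h5

theorem aux_polar0 (A V : H →L[ℂ] H) (hA : star A = A) (hAV : A * A = star V * V) :
    ∃ W : H →L[ℂ] H, W * A = V ∧ ∀ x, A x = 0 → W x = 0 := by
  let K : Submodule ℂ H := (LinearMap.range (A : H →ₗ[ℂ] H)).topologicalClosure
  haveI : CompleteSpace K := (Submodule.isClosed_topologicalClosure _).completeSpace_coe
  let e : H →ₗ[ℂ] K := (A : H →ₗ[ℂ] H).codRestrict K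
    (fun w => Submodule.le_topologicalClosure _ ⟨w, rfl⟩)
  have hd : DenseRange e := by
    intro y
    rw [closure_subtype]
    have : (Subtype.val '' Set.range e) =
        ((LinearMap.range (A : H →ₗ[ℂ] H) : Submodule ℂ H) : Set H) := by
      ext z
      constructor
      · rintro ⟨_, ⟨w, rfl⟩, rfl⟩
        exact ⟨w, rfl⟩
      · rintro ⟨w, rfl⟩
        exact ⟨_, ⟨w, rfl⟩, rfl⟩
    rw [this]
    exact y.2
  have hn : ∃ C : ℝ, ∀ x, ‖(V : H →ₗ[ℂ] H) x‖ ≤ C * ‖e x‖ :=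
    ⟨1, fun x => by
      rw [one_mul]
      exact (aux_norm A V (by rw [hA, hAV]) x).le⟩
  let W0 : K →L[ℂ] H := (V : H →ₗ[ℂ] H).extendOfNorm e
  refine ⟨W0 ∘L K.orthogonalProjection, ?_, ?_⟩
  · ext x
    have h1 : K.orthogonalProjection (A x) = e x :=
      Submodule.orthogonalProjection_mem_subspace_eq_self (e x)
    have h2 : W0 (e x) = V x := LinearMap.extendOfNorm_eq hd hn x
    simp [h1, h2]
  · intro x hx
    have hx2 : x ∈ Kᗮ := by
      have hle : K ≤ (LinearMap.ker (innerSL ℂ x : H →ₗ[ℂ] ℂ)) := by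
        apply Submodule.topologicalClosure_minimal
        · rintro _ ⟨w, rfl⟩
          have : inner ℂ x (A w) = 0 := by
            rw [← ContinuousLinearMap.adjoint_inner_left, ← ContinuousLinearMap.star_eq_adjoint,
              hA, hx, inner_zero_left]
          simpa using this
        · exact ContinuousLinearMap.isClosed_ker (innerSL ℂ x)
      rw [Submodule.mem_orthogonal']
      intro u hu
      simpa using hle hu
    have : K.orthogonalProjection x = 0 :=
      Submodule.orthogonalProjection_mem_subspace_orthogonalComplement_eq_zero hx2
    simp [this]

theorem mem_of_comm (R : VonNeumannAlgebra H) (W : H →L[ℂ] H)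
    (h : ∀ T, (∀ x ∈ R, Commute T x) → Commute T W) : W ∈ R := by
  rw [← VonNeumannAlgebra.commutant_commutant R, VonNeumannAlgebra.mem_commutant_iff]
  intro T hT
  rw [VonNeumannAlgebra.mem_commutant_iff] at hT
  exact h T fun x hx => (hT x hx).symm

theorem abs_mem (R : VonNeumannAlgebra H) (Y : H →L[ℂ] H) (hY : star Y * Y ∈ R) :
    CFC.abs Y ∈ R := by
  apply mem_of_comm
  intro T hT
  have h1 : Commute (star Y * Y) T := (hT _ hY).symm
  exact (Commute.cfcₙ_nnreal h1 _).symm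

theorem abs_star_self (Y : H →L[ℂ] H) : star (CFC.abs Y) = CFC.abs Y :=
  (IsSelfAdjoint.of_nonneg (CFC.abs_nonneg Y)).star_eq

theorem sms_zero {X : H →L[ℂ] H} (h : star X * X = 0) : X = 0 :=
  (CStarRing.star_mul_self_eq_zero_iff X).mp h

theorem aux_polar (R : VonNeumannAlgebra H) (V : H →L[ℂ] H) (hV : V ∈ R) :
    ∃ A W : H →L[ℂ] H, W ∈ R ∧ star A = A ∧ W * A = V ∧ W * (star W * W) = W ∧
      (∀ X : H →L[ℂ] H, V * X = 0 → W * X = 0) ∧ (∀ X : H →L[ℂ] H, A * X = 0 → W * X = 0) := by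
  have hA := abs_star_self V
  have hAA := CFC.abs_mul_abs V
  have hAR := abs_mem R V (mul_mem (star_mem hV) hV)
  generalize CFC.abs V = A at *
  obtain ⟨W, hWA, hker⟩ := aux_polar0 A V hA hAA
  have hker' : ∀ X : H →L[ℂ] H, A * X = 0 → W * X = 0 := by
    intro X hX
    ext x
    exact hker _ (DFunLike.congr_fun hX x)
  have hVX : ∀ X : H →L[ℂ] H, V * X = 0 → A * X = 0 := by
    intro X hX
    apply sms_zero
    rw [star_mul, hA, mul_assoc, ← mul_assoc A, hAA, mul_assoc, hX, mul_zero, mul_zero]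
  have hC : star W * W * A - A = 0 := by
    have hAC : A * (star W * W * A - A) = 0 := by
      have : A * (star W * W * A) = star V * V := by
        rw [← hWA, star_mul, hA]; simp only [mul_assoc]
      rw [mul_sub, this, hAA, sub_self]
    have hWC := hker' _ hAC
    apply sms_zero
    have : star (star W * W * A - A) = A * star W * W - A := by
      simp [hA, mul_assoc]
    rw [this, sub_mul, hAC, mul_assoc, hWC, mul_zero, sub_zero]
  refine ⟨A, W, ?_, hA, hWA, ?_, fun X hX => hker' X (hVX X hX), hker'⟩
  · apply mem_of_comm
    intro T hT
    have h1 := hT V hV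
    have h2 := hT A hAR
    refine sub_eq_zero.mp (aux_zero A (T * W - W * T) hA ?_ ?_)
    · rw [sub_mul, mul_assoc, hWA, mul_assoc, h2.eq, ← mul_assoc W, hWA, h1.eq, sub_self]
    · intro x hx
      have h3 : A (T x) = 0 := by
        have := DFunLike.congr_fun h2.eq x
        simp only [ContinuousLinearMap.mul_apply, hx, map_zero] at this
        exact this.symm
      simp [hker x hx, hker _ h3]
  · refine sub_eq_zero.mp (aux_zero A (W * (star W * W) - W) hA ?_ ?_)
    · rw [sub_mul, mul_assoc, sub_eq_zero.mp hC, sub_self]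
    · intro x hx
      simp [hker x hx]

/-- Finiteness passes from `e` to `W W*` when `W*W ≤ e`. -/
theorem finite_transfer (R : VonNeumannAlgebra H) (Γ e W : H →L[ℂ] H) (he : IsProjOp e)
    (heR : e ∈ R) (hfin : FiniteProj (R : Set (H →L[ℂ] H)) e) (hW : W ∈ R)
    (hWW : W * (star W * W) = W) (hWe : W * e = W) :
    FiniteProj (evenPart (R : Set (H →L[ℂ] H)) Γ) (W * star W) := by
  rintro r ⟨hrR, -⟩ ⟨hr1, hr2⟩ ⟨hrq, hqr⟩ ⟨v, ⟨hvR, -⟩, hv1, hv2⟩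
  obtain ⟨he1, he2⟩ := he
  have hvR' : v ∈ R := hvR
  have hrR' : r ∈ R := hrR
  have hWs : star W * W * star W = star W := by
    have := congrArg star hWW; simpa [mul_assoc] using this
  have heW : e * star W = star W := by
    have := congrArg star hWe; simpa [he2] using this
  have hvr : v * r = v := by
    apply sub_eq_zero.mp
    apply sms_zero
    have : star (v * r - v) = r * star v - star v := by simp [hr2]
    rw [this]
    have e1 : (r * star v - star v) * (v * r - v)
      = r * (star v * v) * r - r * (star v * v) - (star v * v) * r + star v * v := by
      noncomm_ring
    rw [e1, hv1, hr1, hr1]; simp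
  have hvq : v * (W * star W) = v := by
    rw [← hvr, mul_assoc, hrq]
  have hqv : (W * star W) * v = v := by
    rw [← hv2, mul_assoc, hv1, hvr]
  have hqsv : star v * (W * star W) = star v := by
    have := congrArg star hqv; simpa [mul_assoc] using this
  have hqsv2 : (W * star W) * star v = star v := by
    have := congrArg star hvq; simpa [mul_assoc] using this
  set s := star W * W with hs
  have hss : s * s = s := by rw [hs, mul_assoc, hWW]
  have hsst : star s = s := by simp [hs]
  have hse : s * e = s := by rw [hs, mul_assoc, hWe]
  have hes : e * s = s := by rw [hs, ← mul_assoc, heW]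
  set t := star W * v * W + (e - s) with ht
  have hst : star t = star W * star v * W + (e - s) := by
    simp [ht, he2, hsst, mul_assoc]
  have a1 : W * (e - s) = 0 := by rw [mul_sub, hWe, hWW, sub_self]
  have a2 : (e - s) * star W = 0 := by rw [sub_mul, heW, hWs, sub_self]
  have a3 : (e - s) * (e - s) = e - s := by
    rw [mul_sub, sub_mul, sub_mul, he1, hse, hes, hss]; abel
  have gen : ∀ a b : H →L[ℂ] H, (star W * a * W + (e - s)) * (star W * b * W + (e - s)) =
      star W * (a * (W * star W) * b) * W + (e - s) := by
    intro a b
    have : (star W * a * W + (e - s)) * (star W * b * W + (e - s)) =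
      star W * (a * (W * star W) * b) * W + star W * a * (W * (e - s))
        + ((e - s) * star W) * b * W + (e - s) * (e - s) := by
      simp only [mul_add, add_mul, mul_assoc]; abel
    rw [this, a1, a2, a3]; simp
  have htt : t * star t = e := by
    rw [hst, ht, gen, hvq, hv2]
    have : star W * (W * star W) * W = s := by
      rw [← mul_assoc, hWs]
    rw [this]; abel
  have hf : star t * t = star W * r * W + (e - s) := by
    rw [hst, ht, gen, hqsv, hv1]
  have hte : t * e = t := by
    rw [ht, add_mul, mul_assoc, hWe, sub_mul, he1, hse]
  have het : e * t = t := by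
    rw [ht, mul_add, ← mul_assoc, ← mul_assoc, heW, mul_sub, he1, hes]
  have hest : e * star t = star t := by
    have := congrArg star hte; simpa [he2] using this
  have htR : t ∈ R :=
    add_mem (mul_mem (mul_mem (star_mem hW) hvR') hW) (sub_mem heR (mul_mem (star_mem hW) hW))
  have key := hfin (star t * t) (mul_mem (star_mem htR) htR)
    ⟨by rw [mul_assoc, ← mul_assoc t, htt, het], by simp⟩
    ⟨by rw [mul_assoc, hte], by rw [← mul_assoc, hest]⟩ ⟨t, htR, rfl, htt⟩
  rw [hf] at key
  have k2 : star W * r * W = s := by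
    have : star W * r * W = (star W * r * W + (e - s)) - e + s := by abel
    rw [this, key]; abel
  have k3 : W * (star W * r * W) * star W = W * star W := by
    rw [k2, hWW]
  have k4 : W * (star W * r * W) * star W = (W * star W) * r * (W * star W) := by
    simp only [mul_assoc]
  rw [k4, hqr, hrq] at k3
  exact k3

/-- An element `V ∈ R e` with `V V*` even vanishes. -/
theorem V_zero (R : VonNeumannAlgebra H) (Γ : H →L[ℂ] H) (hΓ : IsSAU Γ)
    (h0 : TypeIII (evenPart (R : Set (H →L[ℂ] H)) Γ)) (e V : H →L[ℂ] H) (he : IsProjOp e)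
    (heR : e ∈ R) (hfin : FiniteProj (R : Set (H →L[ℂ] H)) e) (hV : V ∈ R) (hVe : V * e = V)
    (hev : Γ * (V * star V) = V * star V * Γ) : V = 0 := by
  obtain ⟨A, W, hW, hA, hWA, hWW, hVX, hAX⟩ := aux_polar R V hV
  obtain ⟨hg1, hg2⟩ := hΓ
  have hWe : W * e = W := by
    have := hVX (1 - e) (by rw [mul_sub, hVe, mul_one, sub_self])
    rw [mul_sub, mul_one] at this
    exact (sub_eq_zero.mp this).symm
  have hWs : star W * W * star W = star W := by
    have := congrArg star hWW; simpa [mul_assoc] using this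
  have hVs : star V = A * star W := by rw [← hWA, star_mul, hA]
  set q := W * star W with hq
  have hqq : q * q = q := by rw [hq, mul_assoc, ← mul_assoc (star W), hWs]
  have hqs : star q = q := by simp [hq]
  have b1 : star W * (1 - q) = 0 := by
    rw [mul_sub, mul_one, hq, ← mul_assoc, hWs, sub_self]
  have b2 : star V * Γ * (1 - q) = 0 := by
    apply sms_zero
    have : star (star V * Γ * (1 - q)) * (star V * Γ * (1 - q)) =
        (1 - q) * Γ * (V * star V * Γ) * (1 - q) := by
      simp [hg1, hqs, mul_assoc]
    rw [this, ← hev]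
    have : (1 - q) * Γ * (Γ * (V * star V)) * (1 - q) =
      (1 - q) * Γ * Γ * V * (A * (star W * (1 - q))) := by
      rw [hVs]; simp only [mul_assoc]
    rw [this, b1, mul_zero, mul_zero]
  have b3 : q * Γ * (1 - q) = 0 := by
    have := hAX (star W * Γ * (1 - q)) (by
      rw [← b2, hVs]; simp only [mul_assoc])
    rw [← this, hq]; simp only [mul_assoc]
  have b4 : q * Γ = q * Γ * q := by
    rw [mul_sub, mul_one] at b3
    exact sub_eq_zero.mp b3
  have b5 : Γ * q = q * Γ * q := by
    have := congrArg star b4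
    simpa [hg1, hqs, mul_assoc] using this
  have hqR : q ∈ R := mul_mem hW (star_mem hW)
  have hq0 : q = 0 := h0 q ⟨hqR, by rw [b5, ← b4, mul_assoc, hg2, mul_one]⟩ ⟨hqq, hqs⟩
    (finite_transfer R Γ e W he heR hfin hW hWW hWe)
  have hW0 : W = 0 := by rw [← hWW, ← mul_assoc, ← hq, hq0, zero_mul]
  rw [← hWA, hW0, zero_mul]

theorem Y_zero (R : VonNeumannAlgebra H) (Γ : H →L[ℂ] H) (hΓ : IsSAU Γ)
    (hinv : ∀ x ∈ R, Γ * x * Γ ∈ R)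
    (h0 : TypeIII (evenPart (R : Set (H →L[ℂ] H)) Γ)) (e Y : H →L[ℂ] H) (he : IsProjOp e)
    (heR : e ∈ R) (hfin : FiniteProj (R : Set (H →L[ℂ] H)) e) (hY : star Y = Y)
    (hYe : Y * e = Y) (hYR : Y * Γ ∈ R) : Y = 0 := by
  obtain ⟨hg1, hg2⟩ := id hΓ
  have hGY : Γ * Y ∈ R := by
    have := hinv _ hYR
    rwa [mul_assoc, mul_assoc, hg2, mul_one] at this
  have hYY : star Y * Y ∈ R := by
    have := mul_mem hYR hGY
    rw [mul_assoc, ← mul_assoc Γ, hg2, one_mul] at this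
    rwa [hY]
  have hA := abs_star_self Y
  have hAA := CFC.abs_mul_abs Y
  have hAR := abs_mem R Y hYY
  have hAY : CFC.abs Y * Y = Y * CFC.abs Y :=
    (CFC.commute_abs_self Y (IsSelfAdjoint.isStarNormal hY)).eq
  generalize CFC.abs Y = A at *
  rw [hY] at hAA
  have hAe : A * e = A := by
    apply sub_eq_zero.mp
    apply sms_zero
    have e1 : star (A * e - A) * (A * e - A) =
        e * (A * A) * e - e * (A * A) - (A * A) * e + A * A := by
      simp only [star_sub, star_mul, hA, he.2]
      noncomm_ring
    have e2 : e * Y = Y := by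
      have := congrArg star hYe; simpa [he.2, hY] using this
    rw [e1, hAA, ← mul_assoc e, e2, mul_assoc, hYe]; simp
  have hYY' : ∀ x, A * (A * x) = Y * (Y * x) := by
    intro x; rw [← mul_assoc, hAA, mul_assoc]
  have hAY' : ∀ x, A * (Y * x) = Y * (A * x) := by
    intro x; rw [← mul_assoc, hAY, mul_assoc]
  have hgg : ∀ x, Γ * (Γ * x) = x := by
    intro x; rw [← mul_assoc, hg2, one_mul]
  have v1 : A + Γ * Y = 0 := by
    refine V_zero R Γ hΓ h0 e _ he heR hfin (add_mem hAR hGY) (by rw [add_mul, mul_assoc, hYe, hAe]) ?_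
    simp only [star_add, star_mul, hA, hY, hg1, mul_add, add_mul, mul_assoc, hgg, hYY', hAY',
      hAA, hAY, hg2, mul_one]
    abel
  have v2 : A - Γ * Y = 0 := by
    refine V_zero R Γ hΓ h0 e _ he heR hfin (sub_mem hAR hGY) (by rw [sub_mul, mul_assoc, hYe, hAe]) ?_
    simp only [star_sub, star_mul, hA, hY, hg1, mul_sub, sub_mul, mul_assoc, hgg, hYY', hAY',
      hAA, hAY, hg2, mul_one]
    abel
  have v3 : (2 : ℂ) • (Γ * Y) = 0 := by
    have : (2 : ℂ) • (Γ * Y) = (A + Γ * Y) - (A - Γ * Y) := by rw [two_smul]; abel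
    rw [this, v1, v2, sub_self]
  have v4 : Γ * Y = 0 := (smul_eq_zero.mp v3).resolve_left two_ne_zero
  rw [← hgg Y, v4, mul_zero]

theorem smul_mem_vn (R : VonNeumannAlgebra H) (c : ℂ) {x : H →L[ℂ] H} (hx : x ∈ R) : c • x ∈ R :=
  R.toStarSubalgebra.smul_mem hx c

/-- if the even part `R⁰` is of type III, then `R` is of type III. -/
theorem stmt_9 (R : VonNeumannAlgebra H) (Γ : H →L[ℂ] H) (hΓ : IsSAU Γ)
    (hinv : ∀ x ∈ R, Γ * x * Γ ∈ R)
    (h0 : TypeIII (evenPart (R : Set (H →L[ℂ] H)) Γ)) :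
    TypeIII (R : Set (H →L[ℂ] H)) := by
  intro e heR' he hfin
  have heR : e ∈ R := heR'
  obtain ⟨hg1, hg2⟩ := id hΓ
  obtain ⟨he1, he2⟩ := id he
  have hgg : ∀ x, Γ * (Γ * x) = x := by
    intro x; rw [← mul_assoc, hg2, one_mul]
  have hee : ∀ x, e * (e * x) = e * x := by
    intro x; rw [← mul_assoc, he1]
  -- corner `e R θ(e)` vanishes
  have hcorner : ∀ x ∈ R, e * x * (Γ * e * Γ) = 0 := by
    intro x hx
    set Z := e * x * Γ * e with hZ
    have hZs : star Z = e * Γ * star x * e := by simp [hZ, hg1, he2, mul_assoc]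
    have hZR : Z * Γ ∈ R := by
      have := mul_mem (mul_mem heR hx) (hinv e heR)
      simpa only [hZ, mul_assoc] using this
    have hZsR : star Z * Γ ∈ R := by
      have := mul_mem heR (hinv _ (mul_mem (star_mem hx) heR))
      simpa only [hZs, mul_assoc] using this
    have hZe : Z * e = Z := by rw [hZ, mul_assoc, he1]
    have hZse : star Z * e = star Z := by rw [hZs, mul_assoc, he1]
    have y1 : Z + star Z = 0 := by
      refine Y_zero R Γ hΓ hinv h0 e _ he heR hfin (by rw [star_add, star_star, add_comm])
        (by rw [add_mul, hZe, hZse]) ?_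
      rw [add_mul]; exact add_mem hZR hZsR
    have y2 : Complex.I • (Z - star Z) = 0 := by
      refine Y_zero R Γ hΓ hinv h0 e _ he heR hfin ?_ ?_ ?_
      · rw [star_smul, star_sub, star_star, Complex.star_def, Complex.conj_I, neg_smul,
          ← smul_neg, neg_sub]
      · rw [smul_mul_assoc, sub_mul, hZe, hZse]
      · rw [smul_mul_assoc, sub_mul]
        exact smul_mem_vn R _ (sub_mem hZR hZsR)
    have y3 : Z - star Z = 0 := (smul_eq_zero.mp y2).resolve_left Complex.I_ne_zero
    have y4 : (2 : ℂ) • Z = 0 := by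
      have : (2 : ℂ) • Z = (Z + star Z) + (Z - star Z) := by rw [two_smul]; abel
      rw [this, y1, y3, add_zero]
    have y5 : Z = 0 := (smul_eq_zero.mp y4).resolve_left two_ne_zero
    have : e * x * (Γ * e * Γ) = Z * Γ := by simp only [hZ, mul_assoc]
    rw [this, y5, zero_mul]
  have hfR : Γ * e * Γ ∈ R := hinv e heR
  set f := Γ * e * Γ with hf
  have hff : f * f = f := by simp only [hf, mul_assoc, hgg, hee]
  have hfs : star f = f := by simp [hf, hg1, he2, mul_assoc]
  have hcorner2 : ∀ x ∈ R, f * x * e = 0 := by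
    intro x hx
    have := congrArg star (hcorner _ (star_mem hx))
    simpa [he2, hfs, mul_assoc] using this
  have hef : e * f = 0 := by simpa using hcorner 1 (one_mem R)
  have hfe : f * e = 0 := by simpa using hcorner2 1 (one_mem R)
  have hgf : Γ * f * Γ = e := by simp only [hf, mul_assoc, hgg, hg2, mul_one]
  have hp0 : e + f = 0 := by
    refine h0 (e + f) ⟨add_mem heR hfR, ?_⟩ ⟨?_, ?_⟩ ?_
    · rw [mul_add, add_mul, hgf, ← hf, add_comm]
    · rw [mul_add, add_mul, add_mul, he1, hff, hef, hfe]; simp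
    · rw [star_add, he2, hfs]
    · rintro r ⟨hrR', hrev⟩ ⟨hr1, hr2⟩ ⟨hrp, hpr⟩ ⟨v, ⟨hvR', -⟩, hv1, hv2⟩
      have hrR : r ∈ R := hrR'
      have hvR : v ∈ R := hvR'
      have hpv : (e + f) * v = v := by
        rw [← hv2, mul_assoc, hv1]
        apply sub_eq_zero.mp
        apply sms_zero
        have e1 : star (v * r - v) * (v * r - v)
          = r * (star v * v) * r - r * (star v * v) - (star v * v) * r + star v * v := by
          simp only [star_sub, star_mul, hr2]
          noncomm_ring
        rw [e1, hv1, hr1, hr1]; simp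
      have hve : v * e = e * v * e := by
        conv_lhs => rw [← hpv]
        rw [add_mul, add_mul, hcorner2 v hvR, add_zero]
      have hesv : e * star v = e * star v * e := by
        have := congrArg star hve
        simpa [he2, mul_assoc] using this
      have hsve : star v * e = e * star v * e := by
        have h5 : star v * (e + f) = star v := by
          have := congrArg star hpv
          simpa [he2, hfs, mul_add, add_mul] using this
        have hvp : v * (e + f) = v := by
          have hvr : v * r = v := by
            apply sub_eq_zero.mp
            apply sms_zero
            have e1 : star (v * r - v) * (v * r - v)
              = r * (star v * v) * r - r * (star v * v) - (star v * v) * r + star v * v := by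
              simp only [star_sub, star_mul, hr2]
              noncomm_ring
            rw [e1, hv1, hr1, hr1]; simp
          rw [← hvr, mul_assoc, hrp]
        have h6 : (e + f) * star v = star v := by
          have := congrArg star hvp
          simpa [he2, hfs] using this
        conv_lhs => rw [← h6]
        rw [add_mul, add_mul, hcorner2 _ (star_mem hvR), add_zero]
      have hts : star (e * v * e) = e * star v * e := by simp [he2, mul_assoc]
      have htR : e * v * e ∈ R := mul_mem (mul_mem heR hvR) heR
      have tt1 : e * v * e * star (e * v * e) = e := by
        rw [hts, ← hve, ← hesv]
        have : v * e * (e * star v) = v * (e * star v) := by rw [mul_assoc, hee]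
        rw [this, hesv, ← hsve, ← mul_assoc, hv2, add_mul, he1, hfe, add_zero]
      have tt2 : star (e * v * e) * (e * v * e) = e * r * e := by
        rw [hts, ← hve, ← hesv, ← hv1]; simp only [mul_assoc]
      have key := hfin (star (e * v * e) * (e * v * e)) (mul_mem (star_mem htR) htR)
        ⟨by rw [mul_assoc, ← mul_assoc (e * v * e), tt1, ← mul_assoc e, ← mul_assoc e, he1], by simp⟩
        ⟨by rw [tt2, mul_assoc, he1], by rw [tt2, ← mul_assoc, ← mul_assoc, he1]⟩
        ⟨_, htR, rfl, tt1⟩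
      rw [tt2] at key
      have key2 : f * r * f = f := by
        have : Γ * (e * r * e) * Γ = f * (Γ * r * Γ) * f := by
          simp only [hf, mul_assoc, hgg]
        rw [← hrev, ← this, key]
      have : r = (e + f) * r * (e + f) := by rw [hpr, hrp]
      rw [this, mul_add, add_mul, add_mul, add_mul, key, key2, hcorner r hrR, hcorner2 r hrR]
      simp
  have : e = e * (e + f) := by rw [mul_add, he1, hef, add_zero]
  rw [this, hp0, mul_zero]
end
end

section
/- Let (R₁, Ad_{Γ₁}) and (R₂, Ad_{Γ₂}) be graded von Neumann algebras. If the von Neumann tensor product R₁ ⊗̄ (R₂)^(0) is of type III, then the graded tensor product R₁ ⊗̂ R₂ is of type III. -/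
noncomputable section

variable {H : Type*} [NormedAddCommGroup H] [InnerProductSpace ℂ H] [CompleteSpace H]

section Tensor

variable {H₁ H₂ K : Type*}
  [NormedAddCommGroup H₁] [InnerProductSpace ℂ H₁] [CompleteSpace H₁]
  [NormedAddCommGroup H₂] [InnerProductSpace ℂ H₂] [CompleteSpace H₂]
  [NormedAddCommGroup K] [InnerProductSpace ℂ K] [CompleteSpace K]

/-- `T` realizes the (spatial) tensor product of operators: it is bilinear,
multiplicative, star-preserving and unital, modelling `A ⊗ B` on `H₁ ⊗ H₂ = K`. -/
def IsTensorMap (T : (H₁ →L[ℂ] H₁) → (H₂ →L[ℂ] H₂) → (K →L[ℂ] K)) : Prop :=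
  T 1 1 = 1 ∧
  (∀ A B C D, T A B * T C D = T (A * C) (B * D)) ∧
  (∀ A B, star (T A B) = T (star A) (star B)) ∧
  (∀ A A' B, T (A + A') B = T A B + T A' B) ∧
  (∀ A B B', T A (B + B') = T A B + T A B') ∧
  (∀ (c : ℂ) A B, T (c • A) B = c • T A B) ∧
  (∀ (c : ℂ) A B, T A (c • B) = c • T A B)

/-- The graded tensor product `R₁ ⊗̂ R₂`: the von Neumann algebra generated by the
operators `A Γ₁^(∂B) ⊗ B` for homogeneous `B`. -/
def gradedTP (T : (H₁ →L[ℂ] H₁) → (H₂ →L[ℂ] H₂) → (K →L[ℂ] K))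
    (R₁ : Set (H₁ →L[ℂ] H₁)) (Γ₁ : H₁ →L[ℂ] H₁)
    (R₂ : Set (H₂ →L[ℂ] H₂)) (Γ₂ : H₂ →L[ℂ] H₂) : Set (K →L[ℂ] K) :=
  genVN ({x | ∃ A ∈ R₁, ∃ B ∈ evenPart R₂ Γ₂, x = T A B} ∪
         {x | ∃ A ∈ R₁, ∃ B ∈ oddPart R₂ Γ₂, x = T (A * Γ₁) B})

/-- The ordinary von Neumann tensor product `R₁ ⊗̄ R₂`: generated by simple tensors. -/
def normalTP (T : (H₁ →L[ℂ] H₁) → (H₂ →L[ℂ] H₂) → (K →L[ℂ] K))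
    (R₁ : Set (H₁ →L[ℂ] H₁)) (R₂ : Set (H₂ →L[ℂ] H₂)) : Set (K →L[ℂ] K) :=
  genVN {x | ∃ A ∈ R₁, ∃ B ∈ R₂, x = T A B}

end Tensor


theorem proj_comm_aux {E : Type*} [NormedAddCommGroup E] [InnerProductSpace ℂ E]
    (W : Submodule ℂ E) [W.HasOrthogonalProjection] (D D' : E →ₗ[ℂ] E)
    (hadj : ∀ u w, inner ℂ (D u) w = inner ℂ u (D' w))
    (h : ∀ w ∈ W, D w ∈ W) (h' : ∀ w ∈ W, D' w ∈ W) (u : E) :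
    W.starProjection (D u) = D (W.starProjection u) := by
  refine Submodule.eq_starProjection_of_mem_of_inner_eq_zero (h _ (Submodule.starProjection_apply_mem _ _)) ?_
  intro w hw
  rw [← map_sub, hadj]
  exact Submodule.starProjection_inner_eq_zero _ _ (h' _ hw)

abbrev PiE (K : Type*) (n : ℕ) := PiLp 2 (fun _ : Fin n => K)

theorem density_aux {K : Type*} [NormedAddCommGroup K] [InnerProductSpace ℂ K] [CompleteSpace K]
    (P : Submodule ℂ (K →L[ℂ] K)) (h1 : 1 ∈ P) (hm : ∀ a ∈ P, ∀ b ∈ P, a * b ∈ P)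
    (hs : ∀ a ∈ P, star a ∈ P) (x : K →L[ℂ] K)
    (hx : x ∈ Set.centralizer (Set.centralizer (P : Set (K →L[ℂ] K))))
    {n : ℕ} (v : Fin n → K) (ε : ℝ) (hε : 0 < ε) :
    ∃ c ∈ P, ∀ i, ‖c (v i) - x (v i)‖ < ε := by
  let D : (K →L[ℂ] K) → PiE K n →ₗ[ℂ] PiE K n := fun a =>
    { toFun := fun u => WithLp.toLp 2 (fun i => a (u i))
      map_add' := by intro u w; ext i; simp
      map_smul' := by intro c w; ext i; simp }
  have hDa : ∀ a u i, (D a u) i = a (u i) := fun _ _ _ => rfl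
  have hDc : ∀ a, Continuous (D a) := by
    intro a
    show Continuous fun u : PiE K n => (WithLp.toLp 2 (fun i => a (u i)) : PiE K n)
    fun_prop
  have hDadj : ∀ a u w, inner ℂ (D a u) w = inner ℂ u (D (star a) w) := by
    intro a u w
    simp only [PiLp.inner_apply, hDa]
    refine Finset.sum_congr rfl fun i _ => ?_
    rw [ContinuousLinearMap.star_eq_adjoint, ContinuousLinearMap.adjoint_inner_right]
  let V : PiE K n := WithLp.toLp 2 v
  let L : (K →L[ℂ] K) →ₗ[ℂ] PiE K n :=
    { toFun := fun a => D a V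
      map_add' := by intro u w; ext i; simp [hDa]
      map_smul' := by intro c w; ext i; simp [hDa] }
  let W : Submodule ℂ (PiE K n) := (P.map L).topologicalClosure
  have hWc : IsClosed (W : Set (PiE K n)) := Submodule.isClosed_topologicalClosure _
  have : CompleteSpace W := hWc.completeSpace_coe
  have hinv : ∀ a ∈ P, ∀ w ∈ W, D a w ∈ W := by
    intro a ha w hw
    refine map_mem_closure (hDc a) hw ?_
    rintro _ ⟨b, hb, rfl⟩
    refine ⟨a * b, hm a ha b hb, ?_⟩
    ext i
    simp [L, hDa]
  have hcomm : ∀ a ∈ P, ∀ u, W.starProjection (D a u) = D a (W.starProjection u) :=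
    fun a ha u => proj_comm_aux W (D a) (D (star a)) (hDadj a) (hinv a ha) (hinv _ (hs a ha)) u
  let J : Fin n → K →L[ℂ] PiE K n := fun j =>
    ((PiLp.continuousLinearEquiv 2 ℂ (fun _ : Fin n => K)).symm : (Fin n → K) →L[ℂ] PiE K n) ∘L
      (ContinuousLinearMap.single ℂ (fun _ : Fin n => K) j)
  have hJ : ∀ j k, J j k = PiLp.single 2 j k := fun _ _ => rfl
  have hDJ : ∀ a j k, D a (J j k) = J j (a k) := by
    intro a j k
    ext i
    rw [hDa, hJ, hJ]
    by_cases hij : i = j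
    · subst hij; simp
    · simp [hij]
  have hsum : ∀ u : PiE K n, u = ∑ j, J j (u j) := by
    intro u
    ext i
    simp only [hJ]
    simp [WithLp.ofLp_sum, PiLp.ofLp_single, Finset.sum_apply]
  let Q : Fin n → Fin n → K →L[ℂ] K := fun i j =>
    (PiLp.proj 2 (fun _ : Fin n => K) i) ∘L (W.starProjection ∘L J j)
  have hQ : ∀ i j k, Q i j k = (W.starProjection (J j k)) i := fun _ _ _ => rfl
  have hQc : ∀ i j, Q i j ∈ Set.centralizer (P : Set (K →L[ℂ] K)) := by
    intro i j a ha
    ext k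
    simp only [mul_apply_eq_comp, hQ]
    rw [← hDJ, hcomm a ha, hDa]
  have hxcomm : W.starProjection (D x V) = D x (W.starProjection V) := by
    ext i
    rw [hDa]
    conv_lhs => rw [hsum (D x V)]
    conv_rhs => rw [hsum V]
    simp only [map_sum, WithLp.ofLp_sum, Finset.sum_apply]
    refine Finset.sum_congr rfl fun j _ => ?_
    rw [hDa, ← hQ, ← hQ]
    exact congrArg (fun f : K →L[ℂ] K => f (V j)) (hx _ (hQc i j))
  have hV : V ∈ W := Submodule.le_topologicalClosure _ ⟨1, h1, by ext i; simp [L, hDa]⟩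
  have hxW : D x V ∈ W := by
    rw [Submodule.starProjection_eq_self_iff.2 hV] at hxcomm
    exact Submodule.starProjection_eq_self_iff.1 hxcomm
  obtain ⟨_, ⟨c, hc, rfl⟩, hd⟩ := Metric.mem_closure_iff.1 hxW ε hε
  refine ⟨c, hc, fun i => lt_of_le_of_lt ?_ hd⟩
  rw [dist_comm, dist_eq_norm]
  exact PiLp.norm_apply_le (p := 2) (L c - D x V) i
set_option linter.unusedSimpArgs false
set_option linter.unusedSectionVars false

theorem fixed_aux {K : Type*} [NormedAddCommGroup K] [InnerProductSpace ℂ K] [CompleteSpace K]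
    (S₀ S₁ : Set (K →L[ℂ] K)) (G : K →L[ℂ] K) (hG : G * G = 1)
    (h1 : 1 ∈ S₀) (hm : ∀ a ∈ S₀ ∪ S₁, ∀ b ∈ S₀ ∪ S₁, a * b ∈ S₀ ∪ S₁)
    (hs : ∀ a ∈ S₀ ∪ S₁, star a ∈ S₀ ∪ S₁)
    (h0 : ∀ a ∈ S₀, G * a * G = a) (h1' : ∀ a ∈ S₁, G * a * G = -a)
    (x : K →L[ℂ] K) (hx : x ∈ genVN (S₀ ∪ S₁)) (hxG : G * x * G = x) : x ∈ genVN S₀ := by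
  let P : Submodule ℂ (K →L[ℂ] K) := Submodule.span ℂ (S₀ ∪ S₁)
  have hP1 : 1 ∈ P := Submodule.subset_span (Or.inl h1)
  have hPm : ∀ a ∈ P, ∀ b ∈ P, a * b ∈ P := by
    intro a ha b hb
    have h := Submodule.mul_mem_mul ha hb
    rw [Submodule.span_mul_span] at h
    refine Submodule.span_mono ?_ h
    rintro _ ⟨c, hc, d, hd, rfl⟩
    exact hm c hc d hd
  have hPs : ∀ a ∈ P, star a ∈ P := by
    intro a ha
    induction ha using Submodule.span_induction with
    | mem a ha => exact Submodule.subset_span (hs a ha)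
    | zero => simp
    | add a b _ _ ha hb => rw [star_add]; exact P.add_mem ha hb
    | smul c a _ ha => rw [star_smul]; exact P.smul_mem _ ha
  have hPx : x ∈ Set.centralizer (Set.centralizer (P : Set (K →L[ℂ] K))) :=
    Set.centralizer_subset (Set.centralizer_subset Submodule.subset_span) hx
  have hav : ∀ c ∈ P, c + G * c * G ∈ Submodule.span ℂ S₀ := by
    intro c hc
    induction hc using Submodule.span_induction with
    | mem a ha =>
      rcases ha with ha | ha
      · rw [h0 a ha]
        exact Submodule.add_mem _ (Submodule.subset_span ha) (Submodule.subset_span ha)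
      · rw [h1' a ha]; simp
    | zero => simp
    | add a b _ _ ha hb =>
      have : a + b + G * (a + b) * G = (a + G * a * G) + (b + G * b * G) := by noncomm_ring
      rw [this]; exact Submodule.add_mem _ ha hb
    | smul r a _ ha =>
      have : r • a + G * (r • a) * G = r • (a + G * a * G) := by
        simp [smul_add]
      rw [this]; exact Submodule.smul_mem _ _ ha
  intro y hy
  have hyS : ∀ a ∈ Submodule.span ℂ S₀, a * y = y * a := by
    intro a ha
    induction ha using Submodule.span_induction with
    | mem a ha => exact hy a ha
    | zero => simp
    | add a b _ _ ha hb => rw [add_mul, mul_add, ha, hb]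
    | smul r a _ ha => simp [ha]
  ext ξ
  rw [← sub_eq_zero, ← norm_le_zero_iff]
  refine le_of_forall_pos_le_add fun ε hε => ?_
  rw [zero_add]
  set B : ℝ := (1 + ‖y‖) * (1 + ‖G‖) with hB
  have hBpos : 0 < B := by positivity
  obtain ⟨c, hc, hcv⟩ := density_aux P hP1 hPm hPs x hPx ![ξ, G ξ, y ξ, G (y ξ)] (ε / B) (by positivity)
  have e0 := hcv 0
  have e1 := hcv 1
  have e2 := hcv 2
  have e3 := hcv 3
  simp at e0 e1 e2 e3
  set δ := ε / B with hδ
  set a : K →L[ℂ] K := c + G * c * G with ha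
  have hxv : ∀ v, G (x (G v)) = x v := fun v => by
    conv_rhs => rw [← hxG]
    rfl
  have key : ∀ v, ‖c v - x v‖ < δ → ‖c (G v) - x (G v)‖ < δ →
      ‖a v - (2 : ℂ) • x v‖ ≤ (1 + ‖G‖) * δ := by
    intro v hv hv'
    have : a v - (2 : ℂ) • x v = (c v - x v) + G (c (G v) - x (G v)) := by
      rw [map_sub, hxv, two_smul]
      simp only [ha, add_apply, mul_apply_eq_comp]
      abel
    rw [this]
    calc _ ≤ ‖c v - x v‖ + ‖G (c (G v) - x (G v))‖ := norm_add_le _ _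
      _ ≤ δ + ‖G‖ * δ := by
        refine add_le_add hv.le ((G.le_opNorm _).trans ?_)
        exact mul_le_mul_of_nonneg_left hv'.le (norm_nonneg _)
      _ = _ := by ring
  have k1 := key ξ e0 e1
  have k2 := key (y ξ) e2 e3
  have hay : a (y ξ) = y (a ξ) := congrArg (fun f : K →L[ℂ] K => f ξ) (hyS a (hav c hc))
  have h2 : (2 : ℂ) • (y (x ξ) - x (y ξ)) =
      (a (y ξ) - (2 : ℂ) • x (y ξ)) - y (a ξ - (2 : ℂ) • x ξ) := by
    rw [map_sub, hay, map_smul, smul_sub]; abel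
  have h3 : 2 * ‖y (x ξ) - x (y ξ)‖ ≤ ε := by
    have : 2 * ‖y (x ξ) - x (y ξ)‖ = ‖(2 : ℂ) • (y (x ξ) - x (y ξ))‖ := by
      rw [norm_smul]; simp
    rw [this, h2]
    calc _ ≤ (1 + ‖G‖) * δ + ‖y‖ * ((1 + ‖G‖) * δ) := by
          refine (norm_sub_le _ _).trans (add_le_add k2 ((y.le_opNorm _).trans ?_))
          exact mul_le_mul_of_nonneg_left k1 (norm_nonneg _)
      _ = B * δ := by rw [hB]; ring
      _ = ε := by rw [hδ]; field_simp
  show ‖y (x ξ) - x (y ξ)‖ ≤ ε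
  linarith [norm_nonneg (y (x ξ) - x (y ξ))]

/-- The von Neumann algebra generated by a star-closed set. -/
def genAlg {K : Type*} [NormedAddCommGroup K] [InnerProductSpace ℂ K] [CompleteSpace K]
    (S : Set (K →L[ℂ] K)) (hs : ∀ a ∈ S, star a ∈ S) : VonNeumannAlgebra K where
  carrier := genVN S
  mul_mem' := Set.mul_mem_centralizer
  one_mem' := Set.one_mem_centralizer
  add_mem' := Set.add_mem_centralizer
  zero_mem' := Set.zero_mem_centralizer
  algebraMap_mem' r := fun y _ => (Algebra.commutes r y).symm
  star_mem' := by
    intro a ha y hy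
    have : star y ∈ Set.centralizer S := by
      intro b hb
      have := hy (star b) (hs b hb)
      simpa using (congrArg star this).symm
    have := ha _ this
    simpa using (congrArg star this).symm
  centralizer_centralizer' := by
    show Set.centralizer (Set.centralizer (Set.centralizer (Set.centralizer S))) = _
    rw [Set.centralizer_centralizer_centralizer]; rfl

section VN
variable {K : Type*} [NormedAddCommGroup K] [InnerProductSpace ℂ K] [CompleteSpace K]

theorem vn_mem (M : VonNeumannAlgebra K) (x : K →L[ℂ] K)
    (h : ∀ y ∈ M.commutant, y * x = x * y) : x ∈ M := by
  rw [← M.commutant_commutant]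
  exact VonNeumannAlgebra.mem_commutant_iff.2 h

theorem vn_comm (M : VonNeumannAlgebra K) {x y : K →L[ℂ] K} (hx : x ∈ M)
    (hy : y ∈ M.commutant) : x * y = y * x :=
  VonNeumannAlgebra.mem_commutant_iff.1 hy x hx

theorem vn_cfc (M : VonNeumannAlgebra K) (x : K →L[ℂ] K) (hx : x ∈ M) (f : ℝ → ℝ) :
    cfc f x ∈ M := by
  refine vn_mem M _ fun y hy => ?_
  have h : Commute x y := vn_comm M hx hy
  exact (h.cfc_real f).symm

theorem vn_smul (M : VonNeumannAlgebra K) (c : ℂ) (x : K →L[ℂ] K) (hx : x ∈ M) :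
    c • x ∈ M := M.toStarSubalgebra.smul_mem hx c

theorem vn_range (N : VonNeumannAlgebra K) (a : K →L[ℂ] K) (ha : a ∈ N) :
    ∃ q ∈ N, IsProjOp q ∧ q * a = a ∧ ∀ b : K →L[ℂ] K, b * a = 0 → b * q = 0 := by
  let W : Submodule ℂ K := (LinearMap.range (a : K →ₗ[ℂ] K)).topologicalClosure
  have hWc : IsClosed (W : Set K) := Submodule.isClosed_topologicalClosure _
  have : CompleteSpace W := hWc.completeSpace_coe
  have hinv : ∀ y ∈ N.commutant, ∀ w ∈ W, y w ∈ W := by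
    intro y hy w hw
    refine map_mem_closure y.continuous hw ?_
    rintro _ ⟨b, rfl⟩
    refine ⟨y b, ?_⟩
    exact congrArg (fun f : K →L[ℂ] K => f b) (vn_comm N ha hy)
  refine ⟨W.starProjection, ?_, ⟨?_, ?_⟩, ?_, ?_⟩
  · refine vn_mem N _ fun y hy => ?_
    ext v
    refine (proj_comm_aux W (y : K →ₗ[ℂ] K) ((star y : K →L[ℂ] K) : K →ₗ[ℂ] K) ?_ (hinv y hy)
      (hinv _ (star_mem hy)) v).symm
    intro u w
    simp [ContinuousLinearMap.star_eq_adjoint, ContinuousLinearMap.adjoint_inner_right]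
  · exact W.isIdempotentElem_starProjection
  · exact (isSelfAdjoint_starProjection W)
  · ext v
    exact Submodule.starProjection_eq_self_iff.2
      (Submodule.le_topologicalClosure _ ⟨v, rfl⟩)
  · intro b hb
    ext v
    have hc : IsClosed {w : K | b w = 0} := isClosed_eq b.continuous continuous_const
    have hsub : ((LinearMap.range (a : K →ₗ[ℂ] K) : Submodule ℂ K) : Set K) ⊆ {w : K | b w = 0} := by
      rintro _ ⟨u, rfl⟩
      exact congrArg (fun f : K →L[ℂ] K => f u) hb
    exact closure_minimal hsub hc (Submodule.starProjection_apply_mem W v)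

theorem cut_aux (N M : VonNeumannAlgebra K) (hNM : N ≤ M) (z E : K →L[ℂ] K) (hz : z ∈ M)
    (hzE : z * E = z) (hzN : z * star z ∈ N) (hz0 : z ≠ 0) :
    ∃ q ∈ N, IsProjOp q ∧ q ≠ 0 ∧ ∃ u ∈ M, u * E = u ∧ u * star u = q := by
  set h := z * star z with hh
  have hpos : 0 ≤ h := mul_star_self_nonneg z
  have hsa : IsSelfAdjoint h := hpos.isSelfAdjoint
  have hh0 : h ≠ 0 := fun e => hz0 ((CStarRing.mul_star_self_eq_zero_iff z).1 e)
  have hn : 0 < ‖h‖ := norm_pos_iff.2 hh0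
  set δ := ‖h‖ / 2 with hδ
  have hδ0 : 0 < δ := by positivity
  let f : ℝ → ℝ := fun t => max (t - δ) 0
  let k : ℝ → ℝ := fun t => 1 / Real.sqrt (max t δ)
  have hmpos : ∀ t, 0 < max t δ := fun t => lt_of_lt_of_le hδ0 (le_max_right _ _)
  have hf : Continuous f := by fun_prop
  have hk : Continuous k := by
    refine Continuous.div continuous_const (by fun_prop) fun t => ?_
    exact (Real.sqrt_pos.2 (hmpos t)).ne'
  have hspec : ∀ t ∈ spectrum ℝ h, 0 ≤ t := fun t ht => spectrum_nonneg_of_nonneg hpos ht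
  have hfh : cfc f h ≠ 0 := by
    intro e
    have e1 : cfc (fun t : ℝ => min t δ + f t) h = h := by
      have : (fun t : ℝ => min t δ + f t) = id := by
        funext t
        simp only [f, id]
        rcases le_total t δ with h | h
        · rw [min_eq_left h, max_eq_right (by linarith)]; ring
        · rw [min_eq_right h, max_eq_left (by linarith)]; ring
      rw [this]; exact cfc_id ℝ h
    rw [cfc_add (a := h) (fun t : ℝ => min t δ) f
      (continuous_id.min continuous_const).continuousOn hf.continuousOn, e, add_zero] at e1
    have : ‖cfc (fun t : ℝ => min t δ) h‖ ≤ δ := by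
      refine norm_cfc_le hδ0.le fun t ht => ?_
      rw [Real.norm_of_nonneg (le_min (hspec t ht) hδ0.le)]
      exact min_le_right _ _
    rw [e1] at this
    linarith
  clear_value δ
  obtain ⟨q, hqN, hq, hqa, hqb⟩ := vn_range N (cfc f h) (vn_cfc N h hzN f)
  set a := cfc k h with ha
  have haN : a ∈ N := vn_cfc N h hzN k
  have hasa : star a = a := cfc_predicate k h
  refine ⟨q, hqN, hq, ?_, q * a * z, ?_, ?_, ?_⟩
  · rintro rfl
    exact hfh (by rw [← hqa, zero_mul])
  · exact mul_mem (mul_mem (hNM hqN) (hNM haN)) hz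
  · rw [mul_assoc, hzE]
  · have h1 : (1 - a * h * a) * q = 0 := by
      apply hqb
      have e1 : a * h * a = cfc (fun t => k t * t * k t) h := by
        rw [cfc_mul (a := h) (fun t => k t * t) k (hk.mul continuous_id).continuousOn
          hk.continuousOn, cfc_mul (a := h) k (fun t => t) hk.continuousOn
          continuous_id.continuousOn, cfc_id' ℝ h]
      rw [sub_mul, one_mul, e1, ← cfc_mul (a := h) (fun t => k t * t * k t) f
        ((hk.mul continuous_id).mul hk).continuousOn hf.continuousOn, sub_eq_zero]
      symm
      refine cfc_congr fun t ht => ?_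
      simp only [f, k]
      rcases le_total t δ with h | h
      · rw [max_eq_right (a := t - δ) (by linarith)]; simp
      · rw [max_eq_left (a := t) h]
        have : 0 < t := lt_of_lt_of_le hδ0 h
        have hs := Real.mul_self_sqrt this.le
        have hs0 := Real.sqrt_pos.2 this
        have : 1 / √t * t * (1 / √t) = 1 := by
          field_simp
          nlinarith
        rw [this, one_mul]
    have h2 : a * h * a * q = q := by
      rw [sub_mul, one_mul, sub_eq_zero] at h1; exact h1.symm
    rw [star_mul, star_mul, hasa, hq.2]
    calc q * a * z * (star z * (a * q)) = q * ((a * (z * star z) * a) * q) := by noncomm_ring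
      _ = q := by rw [← hh, h2, hq.1]

theorem star_left {v q : K →L[ℂ] K} (h : v * star v = q) (hq : IsProjOp q) : q * v = v := by
  have : (q * v - v) * star (q * v - v) = 0 := by
    rw [star_sub, star_mul, hq.2]
    calc (q * v - v) * (star v * q - star v)
        = q * (v * star v) * q - q * (v * star v) - (v * star v) * q + v * star v := by noncomm_ring
      _ = 0 := by rw [h, hq.1, hq.1]; noncomm_ring
  exact sub_eq_zero.1 ((CStarRing.mul_star_self_eq_zero_iff _).1 this)

theorem ra {a b c : K →L[ℂ] K} (h : a * b = c) (x : K →L[ℂ] K) : a * (b * x) = c * x := by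
  rw [← mul_assoc, h]

theorem finite_transfer_s18 (N M : VonNeumannAlgebra K) (hNM : N ≤ M) (E : K →L[ℂ] K) (hEM : E ∈ M)
    (hE : IsProjOp E) (hfin : FiniteProj (M : Set (K →L[ℂ] K)) E) (u q : K →L[ℂ] K) (hu : u ∈ M)
    (huE : u * E = u) (huq : u * star u = q) (hq : IsProjOp q) :
    FiniteProj (N : Set (K →L[ℂ] K)) q := by
  rintro f hf hfp ⟨hfq, hqf⟩ ⟨v, hv, hvf, hvq⟩
  have hEs : E * star u = star u := by
    have := congrArg star huE
    rwa [star_mul, hE.2] at this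
  have hqu := star_left huq hq
  have hsq : star u * q = star u := by
    have := congrArg star hqu
    rwa [star_mul, hq.2] at this
  have hqv := star_left hvq hq
  have hft : f * star v = star v := star_left (by rw [star_star]; exact hvf) hfp
  have hvf' : v * f = v := by
    have := congrArg star hft
    rwa [star_mul, hfp.2, star_star] at this
  have hvq' : v * q = v := by rw [← hvf', mul_assoc, hfq]
  have hqt : q * star v = star v := by
    have := congrArg star hvq'
    rwa [star_mul, hq.2] at this
  have htq : star v * q = star v := by
    have := congrArg star hqv
    rwa [star_mul, hq.2] at this
  have hvM := hNM hv
  have hfM := hNM hf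
  have hsM : star u ∈ M := star_mem hu
  have hww : star (E - star u * u + star u * v * u) = E - star u * u + star u * star v * u := by
    simp [hE.2, mul_assoc]
  have key : E - star u * u + star u * f * u = E := by
    apply hfin
    · exact add_mem (sub_mem hEM (mul_mem hsM hu)) (mul_mem (mul_mem hsM hfM) hu)
    · constructor
      · simp only [mul_sub, sub_mul, mul_add, add_mul, mul_assoc, ra huE, ra huq, ra hEs, ra hqu,
          ra hsq, ra hqf, ra hfq, ra hfp.1, huE, huq, hEs, hqu, hsq, hqf, hfq, hfp.1, hE.1, ra hE.1]
        abel
      · simp [hE.2, hfp.2, mul_assoc]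
    · constructor
      · simp only [sub_mul, add_mul, mul_assoc, huE, hE.1]
      · simp only [mul_sub, mul_add, mul_assoc, ra hEs, hE.1]
    · refine ⟨E - star u * u + star u * v * u, ?_, ?_, ?_⟩
      · exact add_mem (sub_mem hEM (mul_mem hsM hu)) (mul_mem (mul_mem hsM hvM) hu)
      · rw [hww]
        simp only [mul_sub, sub_mul, mul_add, add_mul, mul_assoc, ra huE, ra huq, ra hEs, ra hqu,
          ra hsq, ra hqv, ra hvf, huE, hEs, hqu, hsq, hE.1, ra hE.1]
        abel
      · rw [hww]
        simp only [mul_sub, sub_mul, mul_add, add_mul, mul_assoc, ra huE, ra huq, ra hEs, ra hqu,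
          ra hsq, ra hqt, ra hvq, huE, hEs, hqu, hsq, hE.1, ra hE.1]
        abel
  have h2 : star u * f * u = star u * u := by
    have : E - star u * u + star u * f * u - E = 0 := sub_eq_zero.2 key
    rw [← sub_eq_zero, ← this]; abel
  have h3 : u * (star u * f * u) * star u = u * (star u * u) * star u := by rw [h2]
  simpa only [mul_assoc, ra huq, huq, hqf, hfq, hq.1] using h3

end VN

section Main
variable {K : Type*} [NormedAddCommGroup K] [InnerProductSpace ℂ K] [CompleteSpace K]

theorem case_one (N M : VonNeumannAlgebra K) (hNM : N ≤ M) (G : K →L[ℂ] K)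
    (hGs : star G = G) (hG : G * G = 1)
    (hfixN : ∀ x ∈ N, G * x * G = x)
    (hGM : ∀ x ∈ M, G * x * G ∈ M) (hfix : ∀ x ∈ M, G * x * G = x → x ∈ N)
    (hIII : TypeIII (N : Set (K →L[ℂ] K))) (E : K →L[ℂ] K) (hEM : E ∈ M) (hE : IsProjOp E)
    (hfin : FiniteProj (M : Set (K →L[ℂ] K)) E)
    (horth : ∀ m ∈ M, G * E * G * m * E = 0) : E = 0 := by
  obtain ⟨E', hE'⟩ : ∃ E', E' = G * E * G := ⟨_, rfl⟩
  rw [← hE'] at horth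
  have hE'M : E' ∈ M := hE' ▸ hGM E hEM
  have hE's : star E' = E' := by
    rw [hE', star_mul, star_mul, hGs, hE.2, mul_assoc]
  have hE'E' : E' * E' = E' := by
    simp only [hE', mul_assoc, ra hG, hG, one_mul, ra hE.1]
  have horth' : ∀ m ∈ M, E * m * E' = 0 := by
    intro m hm
    have := congrArg star (horth (star m) (star_mem hm))
    simpa [hE.2, hE's, mul_assoc] using this
  have h1 : E' * E = 0 := by simpa using horth 1 (one_mem M)
  have h1' : E * E' = 0 := by simpa using horth' 1 (one_mem M)
  have hGE' : G * E' * G = E := by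
    simp only [hE', mul_assoc, ra hG, hG, one_mul, mul_one]
  have hPN : E + E' ∈ N := by
    apply hfix _ (add_mem hEM hE'M)
    rw [mul_add, add_mul, hGE', ← hE', add_comm]
  have hP : IsProjOp (E + E') := by
    constructor
    · simp [mul_add, add_mul, h1, h1', hE'E', hE.1]
    · rw [star_add, hE.2, hE's]
  have hP0 : E + E' = 0 := by
    apply hIII _ hPN hP
    rintro f hf hfp ⟨hfP, hPf⟩ ⟨v, hv, hvf, hvP⟩
    have hfM := hNM hf
    have hvM := hNM hv
    have o1 := horth f hfM
    have o2 := horth' f hfM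
    have o3 := horth v hvM
    have o4 := horth' v hvM
    rw [mul_assoc] at o1 o2 o3 o4
    have hEP : E * (E + E') = E := by rw [mul_add, hE.1, h1', add_zero]
    have hPE : (E + E') * E = E := by rw [add_mul, hE.1, h1, add_zero]
    -- the corner of f
    have hPv := star_left hvP hP
    have hft : f * star v = star v := star_left (by rw [star_star]; exact hvf) hfp
    have hvf' : v * f = v := by
      have := congrArg star hft
      rwa [star_mul, hfp.2, star_star] at this
    have hvP' : v * (E + E') = v := by rw [← hvf', mul_assoc, hfP]
    have hEv : E * v = E * v * E := by
      have := congrArg (fun t => E * t) hvP'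
      simp only [mul_add, o4, add_zero] at this
      rw [mul_assoc, this]
    have hvE : v * E = E * v * E := by
      have := congrArg (fun t => t * E) hPv
      simp only [add_mul, mul_assoc, o3, add_zero] at this
      rw [mul_assoc, this]
    have hEf : E * f = E * f * E := by
      have := congrArg (fun t => E * t) hfP
      simp only [mul_add, o2, add_zero] at this
      rw [mul_assoc, this]
    have hfE : f * E = E * f * E := by
      have := congrArg (fun t => t * E) hPf
      simp only [add_mul, mul_assoc, o1, add_zero] at this
      rw [mul_assoc, this]
    have hEfc : E * f = f * E := hEf.trans hfE.symm
    have hEvc : E * v = v * E := hEv.trans hvE.symm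
    have hEtc : E * star v = star v * E := by
      have := congrArg star hEvc
      simpa [hE.2] using this.symm
    have key : E * f = E := by
      apply hfin
      · exact mul_mem hEM hfM
      · constructor
        · calc E * f * (E * f) = E * (f * E) * f := by noncomm_ring
            _ = E * f := by rw [← hEfc, ← mul_assoc, hE.1, mul_assoc, hfp.1]
        · rw [star_mul, hE.2, hfp.2, hEfc]
      · constructor
        · exact hEf.symm
        · rw [← mul_assoc, hE.1]
      · refine ⟨E * v, mul_mem hEM hvM, ?_, ?_⟩
        · rw [star_mul, hE.2]
          calc star v * E * (E * v) = star v * (E * E) * v := by noncomm_ring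
            _ = E * f := by rw [hE.1, ← hEtc, mul_assoc, hvf]
        · rw [star_mul, hE.2]
          calc E * v * (star v * E) = E * (v * star v) * E := by noncomm_ring
            _ = E := by rw [hvP, hEP, hE.1]
    have hfG := hfixN f hf
    have key' : E' * f = E' := by
      rw [hE']
      calc G * E * G * f = G * E * G * (G * f * G) := by rw [hfG]
        _ = G * E * (G * G) * f * G := by noncomm_ring
        _ = G * (E * f) * G := by rw [hG]; noncomm_ring
        _ = _ := by rw [key]
    rw [← hPf, add_mul, key, key']
  have := congrArg (fun t => E * t) hP0
  simpa [mul_add, hE.1, h1'] using this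

theorem case_two (N M : VonNeumannAlgebra K) (hNM : N ≤ M) (G : K →L[ℂ] K)
    (hGs : star G = G) (hG : G * G = 1)
    (hGM : ∀ x ∈ M, G * x * G ∈ M) (hfix : ∀ x ∈ M, G * x * G = x → x ∈ N)
    (hIII : TypeIII (N : Set (K →L[ℂ] K))) (E : K →L[ℂ] K) (hEM : E ∈ M) (hE : IsProjOp E)
    (hfin : FiniteProj (M : Set (K →L[ℂ] K)) E)
    (m : K →L[ℂ] K) (hm : m ∈ M) (hsym : G * m * G = star m) : E * G * m * E = 0 := by
  by_contra hne
  obtain ⟨s, hs⟩ : ∃ s, s = E * G * m * E := ⟨_, rfl⟩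
  rw [← hs] at hne
  have hmG : star m * G = G * m := by
    rw [← hsym, mul_assoc, hG, mul_one]
  have hsa : star s = s := by
    rw [hs]
    simp only [star_mul, hE.2, hGs]
    calc E * (star m * (G * E)) = E * (star m * G) * E := by noncomm_ring
      _ = _ := by rw [hmG]; noncomm_ring
  have hsa' : IsSelfAdjoint s := hsa
  have hGsM : G * s ∈ M := by
    have : G * s = G * E * G * m * E := by rw [hs]; noncomm_ring
    rw [this]; exact mul_mem (mul_mem (hGM E hEM) hm) hEM
  have hsE : s * E = s := by rw [hs, mul_assoc, hE.1]
  have hss : s * s ∈ M := by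
    have : s * s = star (G * s) * (G * s) := by
      rw [star_mul, hGs, hsa, mul_assoc, ra hG, one_mul]
    rw [this]; exact mul_mem (star_mem hGsM) hGsM
  obtain ⟨b, hb⟩ : ∃ b, b = CFC.abs s := ⟨_, rfl⟩
  have hbb : b * b = s * s := by rw [hb, CFC.abs_mul_abs, hsa]
  have hbsa : star b = b := by
    rw [hb]; exact (CFC.abs_nonneg s).isSelfAdjoint
  have hbs : b * s = s * b := by
    rw [hb]; exact CFC.commute_abs_self s hsa'.isStarNormal
  have hbM : b ∈ M := by
    refine vn_mem M _ fun y hy => ?_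
    have h : Commute y (s * s) := (vn_comm M hss hy).symm
    have : b = cfc Real.sqrt (s * s) := by
      rw [hb, CFC.abs, hsa, CFC.sqrt_eq_real_sqrt _ (by
        have := star_mul_self_nonneg s
        rwa [hsa] at this)]
      rw [cfcₙ_eq_cfc]
    rw [this]
    exact (h.symm.cfc_real Real.sqrt).symm
  have hbE : b * E = b := by
    have : star (b * E - b) * (b * E - b) = 0 := by
      rw [star_sub, star_mul, hbsa, hE.2]
      calc (E * b - b) * (b * E - b)
          = E * (b * b * E) - E * (b * b) - (b * b) * E + b * b := by noncomm_ring
        _ = 0 := by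
          rw [hbb, mul_assoc, hsE]; noncomm_ring
    exact sub_eq_zero.1 ((CStarRing.star_mul_self_eq_zero_iff _).1 this)
  -- sign choice
  obtain ⟨s', hs'1, hs'2, hs'3, hs'4, hs'5, hs'6⟩ : ∃ s' : K →L[ℂ] K, star s' = s' ∧ b * b = s' * s' ∧
      b * s' = s' * b ∧ G * s' ∈ M ∧ s' * E = s' ∧ b + G * s' ≠ 0 := by
    by_cases h0 : b + G * s = 0
    · refine ⟨-s, by rw [star_neg, hsa], by simp [hbb], by simp [hbs], by simpa using hGsM,
        by simp [hsE], fun h0' => hne ?_⟩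
      have : (2 : ℂ) • b = 0 := by
        rw [two_smul]
        calc b + b = (b + G * s) + (b + G * -s) := by noncomm_ring
          _ = 0 := by rw [h0, h0', add_zero]
      have hb0 : b = 0 := (smul_eq_zero.1 this).resolve_left (by norm_num)
      rw [hb0, zero_mul] at hbb
      apply (CStarRing.star_mul_self_eq_zero_iff s).1
      rw [hsa, ← hbb]
    · exact ⟨s, hsa, hbb, hbs, hGsM, hsE, h0⟩
  have hstar : star (b + G * s') = b + s' * G := by
    rw [star_add, star_mul, hbsa, hs'1, hGs]
  have hzM : b + G * s' ∈ M := add_mem hbM hs'4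
  have hzN : (b + G * s') * star (b + G * s') ∈ N := by
    apply hfix _ (mul_mem hzM (star_mem hzM))
    rw [hstar]
    have : (b + G * s') * (b + s' * G) = s' * s' + s' * b * G + G * (s' * b) + G * (s' * s') * G := by
      calc _ = b * b + (b * s') * G + G * (s' * b) + G * (s' * s') * G := by noncomm_ring
        _ = _ := by rw [hs'3, hs'2]
    rw [this]
    simp only [mul_add, add_mul, mul_assoc, ra hG, hG, one_mul, mul_one]
    abel
  obtain ⟨q, hqN, hq, hq0, u, hu, huE, huq⟩ := cut_aux N M hNM (b + G * s') E hzM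
    (by rw [add_mul, hbE, mul_assoc, hs'5]) hzN hs'6
  exact hq0 (hIII q hqN hq (finite_transfer_s18 N M hNM E hEM hE hfin u q hu huE huq hq))

theorem main_abs (N M : VonNeumannAlgebra K) (hNM : N ≤ M) (G : K →L[ℂ] K)
    (hGs : star G = G) (hG : G * G = 1)
    (hfixN : ∀ x ∈ N, G * x * G = x)
    (hGM : ∀ x ∈ M, G * x * G ∈ M) (hfix : ∀ x ∈ M, G * x * G = x → x ∈ N)
    (hIII : TypeIII (N : Set (K →L[ℂ] K))) : TypeIII (M : Set (K →L[ℂ] K)) := by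
  intro E hEM hE hfin
  refine case_one N M hNM G hGs hG hfixN hGM hfix hIII E hEM hE hfin fun m hm => ?_
  have c2 := case_two N M hNM G hGs hG hGM hfix hIII E hEM hE hfin
  obtain ⟨n, hn⟩ : ∃ n, n = G * star m * G := ⟨_, rfl⟩
  have hnM : n ∈ M := hn ▸ hGM _ (star_mem hm)
  have hsn : G * n * G = star m := by
    simp only [hn, mul_assoc, ra hG, hG, one_mul, mul_one]
  have hn' : star n = G * m * G := by
    rw [hn]; simp [hGs, mul_assoc]
  have k1 := c2 (m + n) (add_mem hm hnM) (by
    rw [mul_add, add_mul, hsn, star_add, hn', add_comm])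
  have k2 := c2 (Complex.I • (m - n)) (vn_smul M _ _ (sub_mem hm hnM)) (by
    rw [star_smul, star_sub, hn', mul_smul_comm, smul_mul_assoc, mul_sub, sub_mul, hsn]
    simp only [RCLike.star_def, Complex.conj_I, neg_smul, smul_sub]
    abel)
  have k3 : E * G * (m - n) * E = 0 := by
    rw [mul_smul_comm, smul_mul_assoc] at k2
    exact (smul_eq_zero.1 k2).resolve_left Complex.I_ne_zero
  have k4 : (2 : ℂ) • (E * G * m * E) = 0 := by
    rw [two_smul]
    calc _ = E * G * (m + n) * E + E * G * (m - n) * E := by noncomm_ring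
      _ = 0 := by rw [k1, k3, add_zero]
  have k5 : E * G * m * E = 0 := (smul_eq_zero.1 k4).resolve_left (by norm_num)
  calc G * E * G * m * E = G * (E * G * m * E) := by noncomm_ring
    _ = 0 := by rw [k5, mul_zero]

end Main

/-- if `R₁ ⊗̄ (R₂)⁰` is of type III, then `R₁ ⊗̂ R₂` is of type III. -/
theorem stmt_18 {H₁ H₂ K : Type*}
    [NormedAddCommGroup H₁] [InnerProductSpace ℂ H₁] [CompleteSpace H₁]
    [NormedAddCommGroup H₂] [InnerProductSpace ℂ H₂] [CompleteSpace H₂]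
    [NormedAddCommGroup K] [InnerProductSpace ℂ K] [CompleteSpace K]
    (T : (H₁ →L[ℂ] H₁) → (H₂ →L[ℂ] H₂) → (K →L[ℂ] K)) (hT : IsTensorMap T)
    (R₁ : VonNeumannAlgebra H₁) (Γ₁ : H₁ →L[ℂ] H₁)
    (h₁ : GradedBy (R₁ : Set (H₁ →L[ℂ] H₁)) Γ₁)
    (R₂ : VonNeumannAlgebra H₂) (Γ₂ : H₂ →L[ℂ] H₂)
    (h₂ : GradedBy (R₂ : Set (H₂ →L[ℂ] H₂)) Γ₂)
    (hIII : TypeIII (genVN {x | ∃ A ∈ (R₁ : Set (H₁ →L[ℂ] H₁)),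
      ∃ B ∈ evenPart (R₂ : Set (H₂ →L[ℂ] H₂)) Γ₂, x = T A B})) :
    TypeIII (gradedTP T (R₁ : Set (H₁ →L[ℂ] H₁)) Γ₁
      (R₂ : Set (H₂ →L[ℂ] H₂)) Γ₂) := by
  obtain ⟨t1, tm, ts, ta, tb, tc, td⟩ := hT
  obtain ⟨⟨g1s, g1⟩, g1R⟩ := h₁
  obtain ⟨⟨g2s, g2⟩, g2R⟩ := h₂
  set S₀ : Set (K →L[ℂ] K) := {x | ∃ A ∈ (R₁ : Set (H₁ →L[ℂ] H₁)),
      ∃ B ∈ evenPart (R₂ : Set (H₂ →L[ℂ] H₂)) Γ₂, x = T A B} with hS₀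
  set S₁ : Set (K →L[ℂ] K) := {x | ∃ A ∈ (R₁ : Set (H₁ →L[ℂ] H₁)),
      ∃ B ∈ oddPart (R₂ : Set (H₂ →L[ℂ] H₂)) Γ₂, x = T (A * Γ₁) B} with hS₁
  have conj_mul : ∀ B B' : H₂ →L[ℂ] H₂, Γ₂ * (B * B') * Γ₂ = (Γ₂ * B * Γ₂) * (Γ₂ * B' * Γ₂) := by
    intro B B'
    simp only [mul_assoc, ra g2]
    simp
  have conj_star : ∀ B : H₂ →L[ℂ] H₂, Γ₂ * star B * Γ₂ = star (Γ₂ * B * Γ₂) := by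
    intro B
    simp [g2s, mul_assoc]
  have tneg : ∀ A B, T A (-B) = - T A B := by
    intro A B
    have := td (-1) A B
    simpa using this
  have hs₀ : ∀ a ∈ S₀, star a ∈ S₀ := by
    rintro _ ⟨A, hA, B, ⟨hB, hB'⟩, rfl⟩
    exact ⟨star A, star_mem hA, star B, ⟨star_mem hB, by rw [conj_star, hB']⟩, ts A B⟩
  have hs₁ : ∀ a ∈ S₁, star a ∈ S₁ := by
    rintro _ ⟨A, hA, B, ⟨hB, hB'⟩, rfl⟩
    refine ⟨Γ₁ * star A * Γ₁, g1R _ (star_mem hA), star B,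
      ⟨star_mem hB, by rw [conj_star, hB', star_neg]⟩, ?_⟩
    rw [ts, star_mul, g1s, mul_assoc _ Γ₁ Γ₁, g1, mul_one]
  have hs : ∀ a ∈ S₀ ∪ S₁, star a ∈ S₀ ∪ S₁ := by
    rintro a (ha | ha)
    · exact Or.inl (hs₀ a ha)
    · exact Or.inr (hs₁ a ha)
  have hm : ∀ a ∈ S₀ ∪ S₁, ∀ b ∈ S₀ ∪ S₁, a * b ∈ S₀ ∪ S₁ := by
    rintro _ (⟨A, hA, B, ⟨hB, hB'⟩, rfl⟩ | ⟨A, hA, B, ⟨hB, hB'⟩, rfl⟩) _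
      (⟨C, hC, D, ⟨hD, hD'⟩, rfl⟩ | ⟨C, hC, D, ⟨hD, hD'⟩, rfl⟩)
    · exact Or.inl ⟨A * C, mul_mem hA hC, B * D, ⟨mul_mem hB hD, by rw [conj_mul, hB', hD']⟩,
        tm _ _ _ _⟩
    · exact Or.inr ⟨A * C, mul_mem hA hC, B * D,
        ⟨mul_mem hB hD, by rw [conj_mul, hB', hD', mul_neg]⟩, by rw [tm, mul_assoc]⟩
    · refine Or.inr ⟨A * (Γ₁ * C * Γ₁), mul_mem hA (g1R C hC), B * D,
        ⟨mul_mem hB hD, by rw [conj_mul, hB', hD', neg_mul]⟩, ?_⟩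
      rw [tm]
      simp only [mul_assoc, g1, mul_one]
    · refine Or.inl ⟨A * (Γ₁ * C * Γ₁), mul_mem hA (g1R C hC), B * D,
        ⟨mul_mem hB hD, by rw [conj_mul, hB', hD', neg_mul_neg]⟩, ?_⟩
      rw [tm]
      simp only [mul_assoc]
  have hGconj : ∀ A B, T 1 Γ₂ * T A B * T 1 Γ₂ = T A (Γ₂ * B * Γ₂) := by
    intro A B
    rw [tm, tm, one_mul, mul_one]
  have hG : T 1 Γ₂ * T 1 Γ₂ = 1 := by rw [tm, g2, one_mul, t1]
  have hGs : star (T 1 Γ₂) = T 1 Γ₂ := by rw [ts, star_one, g2s]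
  have h0 : ∀ a ∈ S₀, T 1 Γ₂ * a * T 1 Γ₂ = a := by
    rintro _ ⟨A, hA, B, ⟨hB, hB'⟩, rfl⟩
    rw [hGconj, hB']
  have h1' : ∀ a ∈ S₁, T 1 Γ₂ * a * T 1 Γ₂ = -a := by
    rintro _ ⟨A, hA, B, ⟨hB, hB'⟩, rfl⟩
    rw [hGconj, hB', tneg]
  have h1 : (1 : K →L[ℂ] K) ∈ S₀ :=
    ⟨1, one_mem R₁, 1, ⟨one_mem R₂, by rw [mul_one, g2]⟩, t1.symm⟩
  generalize T 1 Γ₂ = G at hG hGs h0 h1'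
  have comm_of : ∀ x y : K →L[ℂ] K, G * x * G = y → G * x = y * G := by
    rintro x y rfl
    rw [mul_assoc _ G G, hG, mul_one]
  have hGcent : G ∈ Set.centralizer S₀ := by
    intro a ha
    exact (comm_of a a (h0 a ha)).symm
  refine main_abs (genAlg S₀ hs₀) (genAlg (S₀ ∪ S₁) hs) ?_ G hGs hG ?_ ?_ ?_ hIII
  · exact Set.centralizer_subset (Set.centralizer_subset Set.subset_union_left)
  · intro x hx
    have : G * x = x * G := hx G hGcent
    rw [this, mul_assoc, hG, mul_one]
  · intro x hx y hy
    have hy' : G * y * G ∈ Set.centralizer (S₀ ∪ S₁) := by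
      rintro a (ha | ha)
      · have e := comm_of a a (h0 a ha)
        have e' := hy a (Or.inl ha)
        have e2 : a * G = G * a := e.symm
        simp only [mul_assoc, ra e2, e2, ra e']
      · have e := comm_of a (-a) (h1' a ha)
        have e' := hy a (Or.inr ha)
        have e2 : a * G = - (G * a) := by rw [e]; simp
        simp only [mul_assoc, ra e2, e2, ra e', neg_mul, mul_neg, neg_neg]
    have e := hx _ hy'
    have := congrArg (fun t => G * t * G) e
    simpa only [mul_assoc, ra hG, hG, one_mul, mul_one] using this
  · intro x hx hxG
    exact fixed_aux S₀ S₁ G hG h1 hm hs h0 h1' x hx hxG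
end
end
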